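/- arXiv:1809.03674 — 4 statements merged into one kernel-verified Lean document; each statement's English description precedes it below -/
import Mathlib

section
/- Define cross(u,v) = u₁v₂ − u₂v₁ for u, v ∈ ℝ². Let u, a, b ∈ ℝ² with a ≠ 0, b ≠ 0, cross(u,a) ≥ 0 and cross(u,b) ≥ 0. Then for every s ∈ [0,1] with c = s·a + (1−s)·b ≠ 0, one has cross(u,c)/‖c‖ ≥ min( cross(u,a)/‖a‖, cross(u,b)/‖b‖ ), where ‖·‖ is the Euclidean norm. -/
noncomputable section

open scoped RealInnerProductSpace

/-- The plane `ℝ²` with the Euclidean norm and inner product. -/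
abbrev E2 : Type := EuclideanSpace ℝ (Fin 2)

/-- Action of a 2×2 matrix on a vector of `ℝ²`. -/
def matVec (M : Matrix (Fin 2) (Fin 2) ℝ) (v : E2) : E2 :=
  (WithLp.equiv 2 (Fin 2 → ℝ)).symm (M.mulVec (WithLp.equiv 2 (Fin 2 → ℝ) v))

/-- The Hessian matrix of `f : ℝ² → ℝ` at `x`. -/
def hessM (f : E2 → ℝ) (x : E2) : Matrix (Fin 2) (Fin 2) ℝ :=
  Matrix.of fun i j =>
    fderiv ℝ (fun y => fderiv ℝ f y (EuclideanSpace.single j 1)) x (EuclideanSpace.single i 1)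

/-- The planar cross product `cross(u,v) = u₁v₂ − u₂v₁ = ‖u‖‖v‖ sin θ`. -/
def cross (u v : E2) : ℝ := u 0 * v 1 - u 1 * v 0

section ConcaveDivConvex

variable {𝕜 E : Type*} [Field 𝕜] [LinearOrder 𝕜] [IsStrictOrderedRing 𝕜] [AddCommMonoid E]
  [Module 𝕜 E] {S : Set E} {f g : E → 𝕜} {x y z : E}

theorem min_div_le_div_of_concaveOn_of_convexOn (hf : ConcaveOn 𝕜 S f) (hg : ConvexOn 𝕜 S g)
    (hx : x ∈ S) (hy : y ∈ S) (hz : z ∈ segment 𝕜 x y) (hfx : 0 ≤ f x) (hfy : 0 ≤ f y)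
    (hgx : 0 < g x) (hgy : 0 < g y) (hgz : 0 < g z) :
    min (f x / g x) (f y / g y) ≤ f z / g z := by
  set r := min (f x / g x) (f y / g y)
  have hr : 0 ≤ r := le_min (div_nonneg hfx hgx.le) (div_nonneg hfy hgy.le)
  have h_concave : ConcaveOn 𝕜 S (f - r • g) := hf.sub (hg.smul hr)
  have h_nonneg_x : 0 ≤ (f - r • g) x := sub_nonneg.2 ((le_div_iff₀ hgx).1 (min_le_left _ _))
  have h_nonneg_y : 0 ≤ (f - r • g) y := sub_nonneg.2 ((le_div_iff₀ hgy).1 (min_le_right _ _))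
  have h_nonneg_z : 0 ≤ (f - r • g) z :=
    (le_min h_nonneg_x h_nonneg_y).trans (h_concave.ge_on_segment hx hy hz)
  exact (le_div_iff₀ hgz).2 (sub_nonneg.1 h_nonneg_z)

end ConcaveDivConvex

theorem isLinearMap_cross (u : E2) : IsLinearMap ℝ (cross u) where
  map_add v w := by
    simp only [cross, PiLp.add_apply]
    ring
  map_smul t v := by
    simp only [cross, PiLp.smul_apply, smul_eq_mul]
    ring

theorem stmt3_general {E : Type*} [NormedAddCommGroup E] [NormedSpace ℝ E] (f : E →ₗ[ℝ] ℝ)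
    {a b c : E} (ha : a ≠ 0) (hb : b ≠ 0) (hfa : 0 ≤ f a) (hfb : 0 ≤ f b)
    (hc : c ∈ segment ℝ a b) (hc0 : c ≠ 0) :
    min (f a / ‖a‖) (f b / ‖b‖) ≤ f c / ‖c‖ :=
  min_div_le_div_of_concaveOn_of_convexOn (f.concaveOn convex_univ) convexOn_univ_norm
    (Set.mem_univ a) (Set.mem_univ b) hc hfa hfb
    (norm_pos_iff.2 ha) (norm_pos_iff.2 hb) (norm_pos_iff.2 hc0)

/-- sine of angle to a convex combination.
If `a, b ≠ 0` lie on the nonnegative side of `u` (i.e. `cross(u,a) ≥ 0`, `cross(u,b) ≥ 0`),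
then for any convex combination `c = s a + (1−s) b ≠ 0`,
`cross(u,c)/‖c‖ ≥ min(cross(u,a)/‖a‖, cross(u,b)/‖b‖)`. -/
theorem stmt3 (u a b : E2) (ha : a ≠ 0) (hb : b ≠ 0)
    (hca : 0 ≤ cross u a) (hcb : 0 ≤ cross u b) :
    ∀ s ∈ Set.Icc (0 : ℝ) 1, ∀ c : E2, c = s • a + (1 - s) • b → c ≠ 0 →
      min (cross u a / ‖a‖) (cross u b / ‖b‖) ≤ cross u c / ‖c‖ := by
  intro s hs c hc
  exact stmt3_general ((isLinearMap_cross u).mk' (cross u)) ha hb hca hcb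
    ⟨s, 1 - s, hs.1, sub_nonneg.2 hs.2, add_sub_cancel s 1, hc.symm⟩
end
end

section
/- Let k₁, k₂ > 0 and let r₁*, r₂* ∈ ℝ² be nonzero. Let r₁(t) = r₁* + (r₁(0) − r₁*) e^{−k₁ t} and r₂(t) = r₂* + (r₂(0) − r₂*) e^{−k₂ t}, where the initial values satisfy: (i) r₁(0) = μ r₁* for some μ > 0, and (ii) cross(r₁*, r₂(0)) and cross(r₁*, r₂*) are both nonzero with the same sign. Define ρ* = cross(r₁*, r₂*)/(‖r₁*‖‖r₂*‖) and ρ₀ = cross(r₁(0), r₂(0))/(‖r₁(0)‖‖r₂(0)‖). Then for all t ≥ 0: r₁(t) ≠ 0, r₂(t) ≠ 0, the quantity sin θ₁₂(t) = cross(r₁(t), r₂(t))/(‖r₁(t)‖‖r₂(t)‖) has the same sign as ρ* and ρ₀, and |sin θ₁₂(t)| ≥ min(|ρ*|, |ρ₀|). -/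
noncomputable section

open scoped RealInnerProductSpace

/-!
Fix a nonzero vector `u`. On the open half-plane where `cross u v` has a given sign, `|cross u v|`
is linear in `v` while `‖v‖` is convex, so the ratio `|cross u v| / (‖u‖ * ‖v‖)` is quasiconcave:
along a segment it is at least its minimum at the endpoints. Each agent moves along the segment from
its initial to its desired position; agent 1 stays on the open ray through `r₁*`, so its motion does
not affect the sine.
-/

section QuasiconcaveOn

variable {𝕜 E : Type*} [Field 𝕜] [LinearOrder 𝕜] [IsStrictOrderedRing 𝕜]
  [AddCommMonoid E]

theorem quasiconcaveOn_div_of_concaveOn_of_convexOn [SMul 𝕜 E] {s : Set E} {f g : E → 𝕜}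
    (hf : ConcaveOn 𝕜 s f) (hg : ConvexOn 𝕜 s g)
    (hf_nonneg : ∀ x ∈ s, 0 ≤ f x) (hg_pos : ∀ x ∈ s, 0 < g x) :
    QuasiconcaveOn 𝕜 s fun x ↦ f x / g x := by
  intro r
  rcases le_total r 0 with hr | hr
  · have superlevel_eq : {x ∈ s | r ≤ f x / g x} = s :=
      Set.sep_eq_self_iff_mem_true.2 fun x hx ↦
        hr.trans (div_nonneg (hf_nonneg x hx) (hg_pos x hx).le)
    rw [superlevel_eq]
    exact hf.1
  · have superlevel_eq : {x ∈ s | r ≤ f x / g x} = {x ∈ s | 0 ≤ (f - r • g) x} := by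
      ext x
      refine and_congr_right fun hx ↦ ?_
      rw [le_div_iff₀ (hg_pos x hx), Pi.sub_apply, Pi.smul_apply, smul_eq_mul, sub_nonneg]
    rw [superlevel_eq]
    exact (hf.sub (hg.smul hr)).convex_ge 0

theorem concaveOn_abs_linearMap [Module 𝕜 E] (f : E →ₗ[𝕜] 𝕜) (a : 𝕜) :
    ConcaveOn 𝕜 {v | 0 < a * f v} fun v ↦ |f v| := by
  have h_convex : Convex 𝕜 {v | 0 < a * f v} := convex_halfSpace_gt (a • f).isLinear 0
  refine (((a / |a|) • f).concaveOn h_convex).congr fun v hv ↦ ?_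
  have ha : |a| ≠ 0 := abs_ne_zero.2 (left_ne_zero_of_mul hv.ne')
  calc a / |a| * f v = |a * f v| / |a| := by rw [abs_of_pos hv, div_mul_eq_mul_div]
    _ = |f v| := by rw [abs_mul, mul_div_cancel_left₀ _ ha]

end QuasiconcaveOn

section ExponentialDecay

variable {E : Type*} [AddCommGroup E] [Module ℝ E] {s : ℝ}

theorem add_exp_neg_smul_sub_mem_segment (x y : E) (hs : 0 ≤ s) :
    x + Real.exp (-s) • (y - x) ∈ segment ℝ x y := by
  rw [segment_eq_image']
  exact ⟨Real.exp (-s), ⟨(Real.exp_pos _).le, Real.exp_le_one_iff.2 (neg_nonpos.2 hs)⟩, rfl⟩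

theorem exists_pos_add_exp_neg_smul_sub_eq_smul (x : E) {μ : ℝ} (hμ : 0 < μ) (hs : 0 ≤ s) :
    ∃ c : ℝ, 0 < c ∧ x + Real.exp (-s) • (μ • x - x) = c • x := by
  have h_mem : 1 + Real.exp (-s) • (μ - 1) ∈ segment ℝ 1 μ :=
    add_exp_neg_smul_sub_mem_segment 1 μ hs
  exact ⟨_, (convex_Ioi (0 : ℝ)).segment_subset (Set.mem_Ioi.2 one_pos) hμ h_mem, by module⟩

end ExponentialDecay

theorem cross_smul_left (c : ℝ) (u v : E2) : cross (c • u) v = c * cross u v := by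
  simp only [cross, PiLp.smul_apply, smul_eq_mul]; ring

theorem left_ne_zero_of_cross_ne_zero {u v : E2} (h : cross u v ≠ 0) : u ≠ 0 := by
  rintro rfl
  simp [cross] at h

theorem right_ne_zero_of_cross_ne_zero {u v : E2} (h : cross u v ≠ 0) : v ≠ 0 := by
  rintro rfl
  exact h (isLinearMap_cross u).map_zero

theorem norm_mul_norm_pos_of_cross_ne_zero {u v : E2} (h : cross u v ≠ 0) : 0 < ‖u‖ * ‖v‖ :=
  mul_pos (norm_pos_iff.2 (left_ne_zero_of_cross_ne_zero h))
    (norm_pos_iff.2 (right_ne_zero_of_cross_ne_zero h))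

theorem cross_mul_cross_pos_of_mem_segment {u v w z : E2} (h : 0 < cross u v * cross u w)
    (hz : z ∈ segment ℝ v w) : 0 < cross u z * cross u v := by
  have h_convex : Convex ℝ {x | 0 < cross u v * cross u x} :=
    convex_halfSpace_gt (cross u v • (isLinearMap_cross u).mk').isLinear 0
  rw [mul_comm]
  exact h_convex.segment_subset (mul_self_pos.2 (left_ne_zero_of_mul h.ne')) h hz

/-- The sine of the counterclockwise angle from `u` to `v`, with the junk value `0` when one of
them vanishes. -/
def sinAngle (u v : E2) : ℝ := cross u v / (‖u‖ * ‖v‖)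

theorem sinAngle_smul_left {c : ℝ} (hc : 0 < c) (u v : E2) :
    sinAngle (c • u) v = sinAngle u v := by
  rw [sinAngle, cross_smul_left, norm_smul, Real.norm_of_nonneg hc.le, mul_assoc,
    mul_div_mul_left _ _ hc.ne', sinAngle]

theorem sinAngle_mul_sinAngle_pos {u v w : E2} (h : 0 < cross u v * cross u w) :
    0 < sinAngle u v * sinAngle u w := by
  rw [sinAngle, sinAngle, div_mul_div_comm]
  exact div_pos h (mul_pos (norm_mul_norm_pos_of_cross_ne_zero (left_ne_zero_of_mul h.ne'))
    (norm_mul_norm_pos_of_cross_ne_zero (right_ne_zero_of_mul h.ne')))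

theorem quasiconcaveOn_abs_sinAngle (u : E2) (a : ℝ) :
    QuasiconcaveOn ℝ {v | 0 < a * cross u v} fun v ↦ |sinAngle u v| := by
  have h_num : ConcaveOn ℝ {v | 0 < a * cross u v} fun v ↦ |cross u v| :=
    concaveOn_abs_linearMap (isLinearMap_cross u).mk' a
  have h_den : ConvexOn ℝ {v | 0 < a * cross u v} fun v ↦ ‖u‖ * ‖v‖ :=
    (convexOn_norm h_num.1).smul (norm_nonneg u)
  have abs_sinAngle (v : E2) : |sinAngle u v| = |cross u v| / (‖u‖ * ‖v‖) := by
    rw [sinAngle, abs_div, abs_of_nonneg (mul_nonneg (norm_nonneg u) (norm_nonneg v))]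
  simp only [abs_sinAngle]
  exact quasiconcaveOn_div_of_concaveOn_of_convexOn h_num h_den (fun _ _ ↦ abs_nonneg _)
    fun _ hv ↦ norm_mul_norm_pos_of_cross_ne_zero (right_ne_zero_of_mul hv.ne')

theorem min_abs_sinAngle_le_of_mem_segment {u v w z : E2} (h : 0 < cross u v * cross u w)
    (hz : z ∈ segment ℝ v w) : min |sinAngle u v| |sinAngle u w| ≤ |sinAngle u z| := by
  have hv : 0 < cross u v * cross u v := mul_self_pos.2 (left_ne_zero_of_mul h.ne')
  exact ((quasiconcaveOn_abs_sinAngle u (cross u v) _).segment_subset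
    ⟨hv, min_le_left _ _⟩ ⟨h, min_le_right _ _⟩ hz).2

/-- formation-angle lemma.
Under the formation controller, `rᵢ(t) = rᵢ* + (rᵢ(0) − rᵢ*)e^{−kᵢt}`.  If `r₁(0)` is a
positive multiple of `r₁*` and `cross(r₁*, r₂(0))`, `cross(r₁*, r₂*)` are nonzero of the
same sign, then for all `t ≥ 0` the vectors `r₁(t), r₂(t)` are nonzero,
`sin θ₁₂(t) = cross(r₁(t),r₂(t))/(‖r₁(t)‖‖r₂(t)‖)` has the same sign as
`ρ* = cross(r₁*,r₂*)/(‖r₁*‖‖r₂*‖)` and `ρ₀ = cross(r₁(0),r₂(0))/(‖r₁(0)‖‖r₂(0)‖)`, and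
`|sin θ₁₂(t)| ≥ min(|ρ*|, |ρ₀|)`. -/
theorem stmt4 (k₁ k₂ : ℝ) (hk₁ : 0 < k₁) (hk₂ : 0 < k₂)
    (r₁s r₂s r₁0 r₂0 : E2) (hr₁s : r₁s ≠ 0) (hr₂s : r₂s ≠ 0)
    (μ : ℝ) (hμ : 0 < μ) (hdir : r₁0 = μ • r₁s)
    (hsign : 0 < cross r₁s r₂0 * cross r₁s r₂s)
    (r₁ r₂ : ℝ → E2)
    (hr₁ : ∀ t : ℝ, r₁ t = r₁s + Real.exp (-(k₁ * t)) • (r₁0 - r₁s))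
    (hr₂ : ∀ t : ℝ, r₂ t = r₂s + Real.exp (-(k₂ * t)) • (r₂0 - r₂s))
    (ρs ρ0 : ℝ)
    (hρs : ρs = cross r₁s r₂s / (‖r₁s‖ * ‖r₂s‖))
    (hρ0 : ρ0 = cross r₁0 r₂0 / (‖r₁0‖ * ‖r₂0‖)) :
    ∀ t ≥ (0 : ℝ),
      r₁ t ≠ 0 ∧ r₂ t ≠ 0 ∧
      0 < (cross (r₁ t) (r₂ t) / (‖r₁ t‖ * ‖r₂ t‖)) * ρs ∧
      0 < (cross (r₁ t) (r₂ t) / (‖r₁ t‖ * ‖r₂ t‖)) * ρ0 ∧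
      min |ρs| |ρ0| ≤ |cross (r₁ t) (r₂ t) / (‖r₁ t‖ * ‖r₂ t‖)| := by
  intro t ht
  change r₁ t ≠ 0 ∧ r₂ t ≠ 0 ∧ 0 < sinAngle (r₁ t) (r₂ t) * ρs ∧
    0 < sinAngle (r₁ t) (r₂ t) * ρ0 ∧ min |ρs| |ρ0| ≤ |sinAngle (r₁ t) (r₂ t)|
  obtain ⟨c, hc, hr₁_eq⟩ : ∃ c : ℝ, 0 < c ∧ r₁ t = c • r₁s := by
    rw [hr₁, hdir]
    exact exists_pos_add_exp_neg_smul_sub_eq_smul r₁s hμ (mul_nonneg hk₁.le ht)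
  have hr₂_mem : r₂ t ∈ segment ℝ r₂0 r₂s := by
    rw [hr₂, segment_symm]
    exact add_exp_neg_smul_sub_mem_segment r₂s r₂0 (mul_nonneg hk₂.le ht)
  have h_sign_0 : 0 < cross r₁s (r₂ t) * cross r₁s r₂0 :=
    cross_mul_cross_pos_of_mem_segment hsign hr₂_mem
  have h_sign_s : 0 < cross r₁s (r₂ t) * cross r₁s r₂s :=
    cross_mul_cross_pos_of_mem_segment (by rwa [mul_comm]) (by rwa [segment_symm])
  have hρs_eq : ρs = sinAngle r₁s r₂s := hρs
  have hρ0_eq : ρ0 = sinAngle r₁s r₂0 := by rw [hρ0, hdir, ← sinAngle, sinAngle_smul_left hμ]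
  rw [hr₁_eq, sinAngle_smul_left hc, hρs_eq, hρ0_eq, min_comm]
  exact ⟨smul_ne_zero hc.ne' hr₁s,
    right_ne_zero_of_cross_ne_zero (left_ne_zero_of_mul h_sign_s.ne'),
    sinAngle_mul_sinAngle_pos h_sign_s, sinAngle_mul_sinAngle_pos h_sign_0,
    min_abs_sinAngle_le_of_mem_segment hsign hr₂_mem⟩
end
end

section
/- Under the hypotheses of the formation-angle lemma — i.e., k₁, k₂ > 0, r₁*, r₂* ∈ ℝ² nonzero, r₁(t) = r₁* + (r₁(0) − r₁*)e^{−k₁ t}, r₂(t) = r₂* + (r₂(0) − r₂*)e^{−k₂ t}, r₁(0) = μ r₁* for some μ > 0, and cross(r₁*, r₂(0)), cross(r₁*, r₂*) nonzero of the same sign — define ρ* = cross(r₁*, r₂*)/(‖r₁*‖‖r₂*‖), ρ₀ = cross(r₁(0), r₂(0))/(‖r₁(0)‖‖r₂(0)‖), and let R(t) be the 2×2 matrix whose rows are r₁(t)ᵀ and r₂(t)ᵀ. Then for all t ≥ 0, |det R(t)| ≥ min(|ρ₀|, |ρ*|) · ‖r₁(t)‖ · ‖r₂(t)‖. -/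
noncomputable section

open scoped RealInnerProductSpace

/-- The 2×2 matrix whose rows are `uᵀ` and `vᵀ`. -/
def rowMat (u v : E2) : Matrix (Fin 2) (Fin 2) ℝ :=
  Matrix.of ![WithLp.equiv 2 (Fin 2 → ℝ) u, WithLp.equiv 2 (Fin 2 → ℝ) v]

/-!
The vector `r₁(t)` stays on the line spanned by `r₁*`, so while it does not vanish the sine of its
angle with any fixed vector keeps its absolute value; meanwhile `r₂(t)` runs along the segment from
`r₂(0)` to `r₂*`. For `m ≥ 0` and a linear functional `f`, the vectors `w` with `m ‖w‖ ≤ f w` form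
a convex cone. Taking `f = ± cross(r₁*, ·)`, with the sign that makes `f` nonnegative at both ends,
and `m = min(|ρ₀|, |ρ*|) ‖r₁*‖`, this cone contains both ends of the segment, hence all of it.
-/

section NormedSpace

variable {E : Type*} [SeminormedAddCommGroup E] [NormedSpace ℝ E]

theorem convex_setOf_mul_norm_le (f : E →ₗ[ℝ] ℝ) {m : ℝ} (hm : 0 ≤ m) :
    Convex ℝ {w | m * ‖w‖ ≤ f w} := by
  have hconv : ConvexOn ℝ Set.univ fun w => m * ‖w‖ - f w :=
    (convexOn_univ_norm.smul hm).sub (f.concaveOn convex_univ)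
  simpa only [Set.mem_univ, true_and, sub_nonpos] using hconv.convex_le 0

theorem mul_norm_le_abs_of_mem_segment (f : E →ₗ[ℝ] ℝ) {m : ℝ} (hm : 0 ≤ m) {v v' w : E}
    (hv : m * ‖v‖ ≤ |f v|) (hv' : m * ‖v'‖ ≤ |f v'|) (hsign : 0 ≤ f v * f v')
    (hw : w ∈ segment ℝ v v') : m * ‖w‖ ≤ |f w| := by
  rcases mul_nonneg_iff.mp hsign with ⟨hpos, hpos'⟩ | ⟨hneg, hneg'⟩
  · rw [abs_of_nonneg hpos] at hv
    rw [abs_of_nonneg hpos'] at hv'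
    exact ((convex_setOf_mul_norm_le f hm).segment_subset hv hv' hw).trans (le_abs_self _)
  · rw [abs_of_nonpos hneg] at hv
    rw [abs_of_nonpos hneg'] at hv'
    exact ((convex_setOf_mul_norm_le (-f) hm).segment_subset hv hv' hw).trans (neg_le_abs _)

end NormedSpace

theorem add_exp_neg_smul_sub_mem_segment_s5 {E : Type*} [AddCommGroup E] [Module ℝ E] (x y : E)
    {k t : ℝ} (hk : 0 ≤ k) (ht : 0 ≤ t) :
    x + Real.exp (-(k * t)) • (y - x) ∈ segment ℝ x y := by
  rw [segment_eq_image']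
  exact Set.mem_image_of_mem _
    ⟨(Real.exp_pos _).le, Real.exp_le_one_iff.mpr (neg_nonpos.mpr (mul_nonneg hk ht))⟩

/-- The planar cross product as a bilinear map, which makes the linear-map API available for
`cross u`. -/
def crossBilin : E2 →ₗ[ℝ] E2 →ₗ[ℝ] ℝ :=
  LinearMap.mk₂ ℝ cross
    (fun u u' v => by simp only [cross, PiLp.add_apply]; ring)
    (fun c u v => by simp only [cross, PiLp.smul_apply, smul_eq_mul]; ring)
    (fun u v v' => by simp only [cross, PiLp.add_apply]; ring)
    (fun c u v => by simp only [cross, PiLp.smul_apply, smul_eq_mul]; ring)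

theorem det_rowMat (u v : E2) : (rowMat u v).det = cross u v :=
  Matrix.det_fin_two_of ..

theorem sinAngle_mul_norm_mul_norm (u v : E2) : sinAngle u v * (‖u‖ * ‖v‖) = cross u v := by
  refine div_mul_cancel_of_imp fun h => ?_
  rcases mul_eq_zero.mp h with hu | hv
  · simp [cross, norm_eq_zero.mp hu]
  · simp [cross, norm_eq_zero.mp hv]

theorem abs_sinAngle_mul_norm_mul_norm (u v : E2) :
    |sinAngle u v| * (‖u‖ * ‖v‖) = |cross u v| := by
  rw [← sinAngle_mul_norm_mul_norm, abs_mul, abs_of_nonneg (by positivity : 0 ≤ ‖u‖ * ‖v‖)]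

theorem abs_sinAngle_smul_left {c : ℝ} (hc : c ≠ 0) (u v : E2) :
    |sinAngle (c • u) v| = |sinAngle u v| := by
  simp only [sinAngle, cross_smul_left, norm_smul, Real.norm_eq_abs, abs_div, abs_mul, abs_abs,
    abs_norm, mul_assoc]
  exact mul_div_mul_left _ _ (abs_ne_zero.mpr hc)

theorem min_abs_sinAngle_mul_norm_le_abs_cross {u v v' w : E2}
    (hsign : 0 ≤ cross u v * cross u v') (hw : w ∈ segment ℝ v v') :
    min |sinAngle u v| |sinAngle u v'| * (‖u‖ * ‖w‖) ≤ |cross u w| := by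
  have hv : min |sinAngle u v| |sinAngle u v'| * ‖u‖ * ‖v‖ ≤ |cross u v| := by
    rw [← abs_sinAngle_mul_norm_mul_norm, mul_assoc]
    gcongr
    exact min_le_left _ _
  have hv' : min |sinAngle u v| |sinAngle u v'| * ‖u‖ * ‖v'‖ ≤ |cross u v'| := by
    rw [← abs_sinAngle_mul_norm_mul_norm, mul_assoc]
    gcongr
    exact min_le_right _ _
  rw [← mul_assoc]
  exact mul_norm_le_abs_of_mem_segment (crossBilin u) (by positivity) hv hv' hsign hw

theorem min_abs_sinAngle_mul_norm_le_abs_cross_smul (c : ℝ) {u v v' w : E2}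
    (hsign : 0 ≤ cross u v * cross u v') (hw : w ∈ segment ℝ v v') :
    min |sinAngle u v| |sinAngle u v'| * (‖c • u‖ * ‖w‖) ≤ |cross (c • u) w| :=
  calc min |sinAngle u v| |sinAngle u v'| * (‖c • u‖ * ‖w‖)
      = |c| * (min |sinAngle u v| |sinAngle u v'| * (‖u‖ * ‖w‖)) := by
        rw [norm_smul, Real.norm_eq_abs]; ring
    _ ≤ |c| * |cross u w| := by
        gcongr; exact min_abs_sinAngle_mul_norm_le_abs_cross hsign hw
    _ = |cross (c • u) w| := by rw [cross_smul_left, abs_mul]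

theorem stmt5_general {k₁ k₂ μ : ℝ} (hk₂ : 0 ≤ k₂) (hμ : μ ≠ 0) {r₁s r₂s r₁0 r₂0 : E2}
    (hdir : r₁0 = μ • r₁s) (hsign : 0 < cross r₁s r₂0 * cross r₁s r₂s) {r₁ r₂ : ℝ → E2}
    (hr₁ : ∀ t, r₁ t = r₁s + Real.exp (-(k₁ * t)) • (r₁0 - r₁s))
    (hr₂ : ∀ t, r₂ t = r₂s + Real.exp (-(k₂ * t)) • (r₂0 - r₂s)) {t : ℝ} (ht : 0 ≤ t) :
    min |sinAngle r₁0 r₂0| |sinAngle r₁s r₂s| * (‖r₁ t‖ * ‖r₂ t‖) ≤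
      |(rowMat (r₁ t) (r₂ t)).det| := by
  have hline : r₁ t = (1 + Real.exp (-(k₁ * t)) * (μ - 1)) • r₁s := by
    rw [hr₁, hdir]; module
  have hseg : r₂ t ∈ segment ℝ r₂0 r₂s := by
    rw [hr₂, segment_symm]
    exact add_exp_neg_smul_sub_mem_segment_s5 r₂s r₂0 hk₂ ht
  rw [det_rowMat, hdir, abs_sinAngle_smul_left hμ, hline]
  exact min_abs_sinAngle_mul_norm_le_abs_cross_smul _ hsign.le hseg

/-- determinant lower bound for the formation matrix.
Under the hypotheses of the formation-angle lemma, with `R(t)` the matrix with rows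
`r₁(t)ᵀ, r₂(t)ᵀ`, one has `|det R(t)| ≥ min(|ρ₀|, |ρ*|) ‖r₁(t)‖ ‖r₂(t)‖` for all `t ≥ 0`. -/
theorem stmt5 (k₁ k₂ : ℝ) (hk₁ : 0 < k₁) (hk₂ : 0 < k₂)
    (r₁s r₂s r₁0 r₂0 : E2) (hr₁s : r₁s ≠ 0) (hr₂s : r₂s ≠ 0)
    (μ : ℝ) (hμ : 0 < μ) (hdir : r₁0 = μ • r₁s)
    (hsign : 0 < cross r₁s r₂0 * cross r₁s r₂s)
    (r₁ r₂ : ℝ → E2)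
    (hr₁ : ∀ t : ℝ, r₁ t = r₁s + Real.exp (-(k₁ * t)) • (r₁0 - r₁s))
    (hr₂ : ∀ t : ℝ, r₂ t = r₂s + Real.exp (-(k₂ * t)) • (r₂0 - r₂s))
    (ρs ρ0 : ℝ)
    (hρs : ρs = cross r₁s r₂s / (‖r₁s‖ * ‖r₂s‖))
    (hρ0 : ρ0 = cross r₁0 r₂0 / (‖r₁0‖ * ‖r₂0‖))
    (R : ℝ → Matrix (Fin 2) (Fin 2) ℝ) (hR : ∀ t : ℝ, R t = rowMat (r₁ t) (r₂ t)) :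
    ∀ t ≥ (0 : ℝ), min |ρ0| |ρs| * (‖r₁ t‖ * ‖r₂ t‖) ≤ |(R t).det| := by
  intro t ht
  rw [hρ0, hρs, hR]
  exact stmt5_general hk₂.le hμ.ne' hdir hsign hr₁ hr₂ ht
end
end

section
/- Let f : ℝ² → ℝ be three times continuously differentiable with a unique maximizer x* ∈ ℝ², satisfying: ‖∇²f(y)‖ ≤ M_H for all y; ∇²f(x*) negative definite; ‖∇²f(y₁) − ∇²f(y₂)‖ ≤ L_H ‖y₁ − y₂‖ for all y₁, y₂; and ‖∇²f(y₁) − ∇²f(y₂)‖ ≤ G_H for all y₁, y₂. Let k₀, k₁, k₂ > 0 and r₁*, r₂* ∈ ℝ² with the desired formation matrix R* (rows r₁*ᵀ, r₂*ᵀ) invertible. Let x₀, x₁, x₂ : [0,∞) → ℝ² be differentiable trajectories of the closed-loop system ẋ₀ = k₀ g(t), ẋᵢ = −kᵢ(rᵢ(t) − rᵢ*) + k₀ g(t) for i ∈ {1,2}, where rᵢ(t) = xᵢ(t) − x₀(t), R(t) is the 2×2 matrix with rows r₁(t)ᵀ, r₂(t)ᵀ, assumed invertible for all t ≥ 0, and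 g(t) = R(t)⁻¹ [ f(x₁(t)) − f(x₀(t)) ; f(x₂(t)) − f(x₀(t)) ]. Set α₁ = 2 G_H k₀, let A be the 6×6 block-diagonal matrix diag(−k₁ I₂, −k₂ I₂, k₀ ∇²f(x*)), B the 6×2 matrix [0₂; 0₂; I₂], and C₁ the 2×6 matrix [0₂ 0₂ I₂]. Suppose there exist a symmetric positive definite 6×6 matrix P and scalars λ, τ, γ₁, γ₂ > 0 such that the 12×12 block matrix [[PA + AᵀP + τα₁² C₁ᵀC₁ + λP, PB, PB, PB], [BᵀP, −τI₂, 0, 0], [BᵀP, 0, −γ₁I₂, 0], [BᵀP, 0, 0, −γ₂I₂]] is negative definite. Then rᵢ(t) → rᵢ* as t → ∞ for i ∈ {1,2} (in particular ‖xᵢ(t) − x₀(t)‖ → ‖rᵢ*‖), and limsup_{t→∞} ‖x₀(t) − x*‖² ≤ γ₁ k₀² M_H² ‖R*⁻¹‖² (‖r₁*‖² + ‖r₂*‖²)² / (4 λ σ_min(P)), where σ_min(P) is the smallest eigenvalue of P. -/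
noncomputable section

open scoped RealInnerProductSpace
open Matrix

/-- The operator (spectral) norm of a 2×2 matrix, induced by the Euclidean norm. -/
def l2OpNorm (M : Matrix (Fin 2) (Fin 2) ℝ) : ℝ :=
  ‖LinearMap.toContinuousLinearMap (Matrix.toEuclideanLin M)‖

/-- The vector of `ℝ²` with entries `a, b`. -/
def vec2 (a b : ℝ) : E2 := (WithLp.equiv 2 (Fin 2 → ℝ)).symm ![a, b]

/-- Index type for the 6-dimensional stacked error `χ = (δ₁, δ₂, z)`. -/
abbrev E6 : Type := Fin 2 ⊕ (Fin 2 ⊕ Fin 2)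

/-- Collapse an index of `E6` to the underlying index in `Fin 2` of its block. -/
def collapse : E6 → Fin 2 := Sum.elim id (Sum.elim id id)

/-- The 6×6 block-diagonal system matrix `A = diag(−k₁I₂, −k₂I₂, k₀∇²f(x*))`. -/
def Amat (f : E2 → ℝ) (xs : E2) (k₀ k₁ k₂ : ℝ) : Matrix E6 E6 ℝ :=
  Matrix.fromBlocks ((-k₁) • (1 : Matrix (Fin 2) (Fin 2) ℝ)) 0 0
    (Matrix.fromBlocks ((-k₂) • (1 : Matrix (Fin 2) (Fin 2) ℝ)) 0 0 (k₀ • hessM f xs))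

/-- The 6×2 input matrix `B = [0₂; 0₂; I₂]`. -/
def Bmat : Matrix E6 (Fin 2) ℝ :=
  Matrix.of fun i j =>
    Sum.elim (fun _ => (0 : ℝ))
      (Sum.elim (fun _ => (0 : ℝ)) (fun i' => if i' = j then 1 else 0)) i

/-- The 2×6 output matrix `C₁ = [0₂ 0₂ I₂]`. -/
def C1mat : Matrix (Fin 2) E6 ℝ :=
  Matrix.of fun i x =>
    Sum.elim (fun _ => (0 : ℝ))
      (Sum.elim (fun _ => (0 : ℝ)) (fun j => if i = j then 1 else 0)) x

/-- Top-left 6×6 block of the LMI: `PA + AᵀP + τα₁² C₁ᵀC₁ + λP`. -/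
def Qmat (P A : Matrix E6 E6 ℝ) (τ α₁ lam : ℝ) : Matrix E6 E6 ℝ :=
  P * A + Aᵀ * P + (τ * α₁ ^ 2) • (C1matᵀ * C1mat) + lam • P

/-- Top-right 6×6 block of the LMI: `[PB PB PB]`. -/
def Umat (P : Matrix E6 E6 ℝ) : Matrix E6 E6 ℝ :=
  Matrix.of fun i t => (P * Bmat) i (collapse t)

/-- Bottom-left 6×6 block of the LMI: `[BᵀP; BᵀP; BᵀP]`. -/
def Lmat (P : Matrix E6 E6 ℝ) : Matrix E6 E6 ℝ :=
  Matrix.of fun t i => (Bmatᵀ * P) (collapse t) i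

/-- Bottom-right 6×6 block of the LMI: `diag(−τI₂, −γ₁I₂, −γ₂I₂)`. -/
def Dmat (τ γ₁ γ₂ : ℝ) : Matrix E6 E6 ℝ :=
  Matrix.fromBlocks ((-τ) • (1 : Matrix (Fin 2) (Fin 2) ℝ)) 0 0
    (Matrix.fromBlocks ((-γ₁) • (1 : Matrix (Fin 2) (Fin 2) ℝ)) 0 0
      ((-γ₂) • (1 : Matrix (Fin 2) (Fin 2) ℝ)))

/-- The 12×12 LMI matrix
`[[PA + AᵀP + τα₁²C₁ᵀC₁ + λP, PB, PB, PB], [BᵀP, −τI₂, 0, 0],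
  [BᵀP, 0, −γ₁I₂, 0], [BᵀP, 0, 0, −γ₂I₂]]`. -/
def lmiMat (P A : Matrix E6 E6 ℝ) (lam τ γ₁ γ₂ α₁ : ℝ) : Matrix (E6 ⊕ E6) (E6 ⊕ E6) ℝ :=
  Matrix.fromBlocks (Qmat P A τ α₁ lam) (Umat P) (Lmat P) (Dmat τ γ₁ γ₂)

/-!
The formation errors decay exponentially, so `rᵢ → rᵢ*`. Row `i` of `R (g - ∇f(x₀))` is the Taylor
remainder `f (x₀ + rᵢ) - f x₀ - ⟪∇f(x₀), rᵢ⟫`, of size at most `M_H ‖rᵢ‖² / 2`; hence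
`‖g - ∇f(x₀)‖` is eventually below any number exceeding
`‖R*⁻¹‖ M_H (‖r₁*‖² + ‖r₂*‖²) / 2`. The stacked error obeys `χ' = A χ + B (w₁ + w₂)` with
`w₁ = k₀ (∇f(x₀) - ∇²f(x*) (x₀ - x*))`, bounded by `α₁ ‖C₁ χ‖`, and `w₂ = k₀ (g - ∇f(x₀))`.
Evaluated at `(χ, w₁, w₂, 0)`, the LMI says that `V = χᵀ P χ` satisfies `V' ≤ -λ V + γ₁ ‖w₂‖²`, and
comparison with the linear equation, together with `σ_min(P) ‖x₀ - x*‖² ≤ V`, bounds the limsup.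
-/

section Analysis

open Filter Topology Set

theorem eventually_lt_of_deriv_le {u b : ℝ → ℝ} {lam B c : ℝ} (hlam : 0 < lam)
    (hu : ∀ᶠ t in atTop, DifferentiableAt ℝ u t)
    (hu' : ∀ᶠ t in atTop, deriv u t ≤ -lam * u t + b t)
    (hb : Tendsto b atTop (𝓝 B)) (hc : B / lam < c) : ∀ᶠ t in atTop, u t < c := by
  obtain ⟨d, hBd, hdc⟩ := exists_between hc
  have hbd : ∀ᶠ t in atTop, b t < lam * d :=
    hb.eventually_lt_const (by rwa [mul_comm, ← div_lt_iff₀ hlam])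
  obtain ⟨T, hT⟩ := eventually_atTop.1 (hu.and (hu'.and hbd))
  have hgronwall : ∀ t ≥ T, u t ≤ gronwallBound (u T) (-lam) (lam * d) (t - T) := fun t ht =>
    le_gronwallBound_of_liminf_deriv_right_le (f' := deriv u)
      (fun s hs => (hT s hs.1).1.continuousAt.continuousWithinAt)
      (fun s hs _ hr => (hT s hs.1).1.hasDerivAt.hasDerivWithinAt.liminf_right_slope_le hr) le_rfl
      (fun s hs => by linarith [hT s hs.1]) t ⟨ht, le_rfl⟩
  have hexp : Tendsto (fun t => Real.exp (-lam * (t - T))) atTop (𝓝 0) :=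
    Real.tendsto_exp_atBot.comp <|
      (tendsto_atTop_add_const_right _ (-T) tendsto_id).const_mul_atTop_of_neg (neg_neg_of_pos hlam)
  have hlim : Tendsto (fun t => gronwallBound (u T) (-lam) (lam * d) (t - T)) atTop (𝓝 d) := by
    simp only [gronwallBound_of_K_ne_0 (neg_ne_zero.2 hlam.ne')]
    convert! (hexp.const_mul (u T)).add ((hexp.sub_const 1).const_mul (lam * d / -lam)) using 2
    field_simp
    ring
  filter_upwards [hlim.eventually_lt_const hdc, eventually_ge_atTop T] with t hlt ht
  exact (hgronwall t ht).trans_lt hlt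

variable {E : Type*} [NormedAddCommGroup E] [InnerProductSpace ℝ E]

theorem tendsto_zero_of_hasDerivAt_neg_smul {δ : ℝ → E} {k : ℝ} (hk : 0 < k)
    (hδ : ∀ᶠ t in atTop, HasDerivAt δ (-k • δ t) t) : Tendsto δ atTop (𝓝 0) := by
  have hsq : Tendsto (fun t => ‖δ t‖ ^ 2) atTop (𝓝 0) := by
    refine tendsto_order.2
      ⟨fun a ha => .of_forall fun t => ha.trans_le (sq_nonneg _), fun c hc => ?_⟩
    refine eventually_lt_of_deriv_le (b := fun _ => 0) (lam := 2 * k) (by positivity)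
      (hδ.mono fun t ht => ht.norm_sq.differentiableAt) (hδ.mono fun t ht => ?_)
      tendsto_const_nhds ((zero_div (2 * k)).trans_lt hc)
    rw [ht.norm_sq.deriv, inner_smul_right, real_inner_self_eq_norm_sq]
    linarith
  rw [tendsto_zero_iff_norm_tendsto_zero]
  simpa [Real.sqrt_sq_eq_abs] using hsq.sqrt

open scoped Gradient in
theorem abs_sub_sub_inner_gradient_le [CompleteSpace E] {f : E → ℝ} (hf : Differentiable ℝ f)
    {M : ℝ} {x : E} (hM : ∀ y, ‖∇ f y - ∇ f x‖ ≤ M * ‖y - x‖) (r : E) :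
    |f (x + r) - f x - ⟪∇ f x, r⟫| ≤ M / 2 * ‖r‖ ^ 2 := by
  have hline (s : ℝ) : HasDerivAt (fun s : ℝ => f (x + s • r) - f x - s * ⟪∇ f x, r⟫)
      ⟪∇ f (x + s • r) - ∇ f x, r⟫ s := by
    have hpath : HasDerivAt (fun s : ℝ => x + s • r) r s := by
      simpa using ((hasDerivAt_id s).smul_const r).const_add x
    have hcomp := (hf (x + s • r)).hasFDerivAt.comp_hasDerivAt s hpath
    have hlin : HasDerivAt (fun s : ℝ => s * ⟪∇ f x, r⟫) ⟪∇ f x, r⟫ s := by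
      simpa using (hasDerivAt_id s).mul_const ⟪∇ f x, r⟫
    rw [inner_sub_left, inner_gradient_left (x := x + s • r)]
    exact (hcomp.sub_const (f x)).fun_sub hlin
  have hbound (s : ℝ) :
      HasDerivAt (fun s : ℝ => M / 2 * ‖r‖ ^ 2 * s ^ 2) (M * s * ‖r‖ ^ 2) s :=
    ((hasDerivAt_pow 2 s).const_mul _).congr_deriv (by push_cast; ring)
  have hslope (s : ℝ) (hs : 0 ≤ s) : ‖⟪∇ f (x + s • r) - ∇ f x, r⟫‖ ≤ M * s * ‖r‖ ^ 2 :=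
    calc ‖⟪∇ f (x + s • r) - ∇ f x, r⟫‖ ≤ ‖∇ f (x + s • r) - ∇ f x‖ * ‖r‖ :=
          norm_inner_le_norm _ _
      _ ≤ M * ‖x + s • r - x‖ * ‖r‖ := by gcongr; exact hM _
      _ = M * s * ‖r‖ ^ 2 := by rw [add_sub_cancel_left, norm_smul, Real.norm_of_nonneg hs]; ring
  simpa using image_norm_le_of_norm_deriv_right_le_deriv_boundary (a := 0) (b := 1)
    (fun s _ => (hline s).continuousAt.continuousWithinAt) (fun s _ => (hline s).hasDerivWithinAt)
    (by simp) hbound (fun s hs => hslope s hs.1) (right_mem_Icc.2 zero_le_one)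

open scoped Gradient in
theorem gradient_eq_zero_of_isLocalMax [CompleteSpace E] {f : E → ℝ} {x : E}
    (h : IsLocalMax f x) : ∇ f x = 0 := by
  rw [gradient, h.fderiv_eq_zero, map_zero]

theorem hasFDerivAt_fderiv_apply {F : Type*} [NormedAddCommGroup F] [NormedSpace ℝ F] {f : F → ℝ}
    (hf : ContDiff ℝ 2 f) (x v : F) :
    HasFDerivAt (fun y => fderiv ℝ f y v) ((fderiv ℝ (fderiv ℝ f) x).flip v) x := by
  have hf' : HasFDerivAt (fderiv ℝ f) (fderiv ℝ (fderiv ℝ f) x) x :=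
    ((hf.fderiv_right (m := 1) le_rfl).differentiable one_ne_zero x).hasFDerivAt
  refine (hf'.clm_apply (hasFDerivAt_const v x)).congr_fderiv ?_
  ext
  simp

end Analysis

section QuadraticForms

variable {ι κ : Type*}

theorem hasDerivAt_sumElim {u : ℝ → ι → ℝ} {v : ℝ → κ → ℝ} {u' : ι → ℝ} {v' : κ → ℝ} {t : ℝ}
    (hu : HasDerivAt u u' t) (hv : HasDerivAt v v' t) :
    HasDerivAt (fun s => Sum.elim (u s) (v s)) (Sum.elim u' v') t :=
  hasDerivAt_pi.2 (Sum.rec (hasDerivAt_pi.1 hu) (hasDerivAt_pi.1 hv))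

variable [Fintype ι]

open scoped MatrixOrder in
theorem iInf_eigenvalues_mul_dotProduct_self_le [DecidableEq ι] {A : Matrix ι ι ℝ}
    (hA : A.IsHermitian) (v : ι → ℝ) : (⨅ i, hA.eigenvalues i) * (v ⬝ᵥ v) ≤ v ⬝ᵥ A *ᵥ v := by
  have hle : algebraMap ℝ (Matrix ι ι ℝ) (⨅ i, hA.eigenvalues i) ≤ A := by
    refine algebraMap_le_of_le_spectrum (fun {x} hx => ?_) hA
    rw [hA.spectrum_real_eq_range_eigenvalues] at hx
    obtain ⟨i, rfl⟩ := hx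
    exact ciInf_le (Set.finite_range _).bddBelow i
  have hnonneg := (Matrix.le_iff.1 hle).dotProduct_mulVec_nonneg v
  rw [Algebra.algebraMap_eq_smul_one, sub_mulVec, dotProduct_sub, smul_mulVec, one_mulVec,
    dotProduct_smul, smul_eq_mul, star_trivial] at hnonneg
  linarith

theorem hasDerivAt_dotProduct {u v : ℝ → ι → ℝ} {u' v' : ι → ℝ} {t : ℝ}
    (hu : HasDerivAt u u' t) (hv : HasDerivAt v v' t) :
    HasDerivAt (fun s => u s ⬝ᵥ v s) (u' ⬝ᵥ v t + u t ⬝ᵥ v') t := by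
  simp only [dotProduct, ← Finset.sum_add_distrib]
  exact HasDerivAt.fun_sum fun i _ => (hasDerivAt_pi.1 hu i).mul (hasDerivAt_pi.1 hv i)

theorem hasDerivAt_dotProduct_mulVec_self {P : Matrix ι ι ℝ} (hP : P.IsSymm) {χ : ℝ → ι → ℝ}
    {χ' : ι → ℝ} {t : ℝ} (h : HasDerivAt χ χ' t) :
    HasDerivAt (fun s => χ s ⬝ᵥ P *ᵥ χ s) (2 * (χ t ⬝ᵥ P *ᵥ χ')) t := by
  have hPχ : HasDerivAt (fun s => P *ᵥ χ s) (P *ᵥ χ') t :=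
    P.mulVecLin.toContinuousLinearMap.hasFDerivAt.comp_hasDerivAt t h
  refine (hasDerivAt_dotProduct h hPχ).congr_deriv ?_
  rw [← P.dotProduct_transpose_mulVec, hP.eq, two_mul]

theorem hasDerivAt_ofLp {u : ℝ → EuclideanSpace ℝ ι} {u' : EuclideanSpace ℝ ι} {t : ℝ}
    (h : HasDerivAt u u' t) : HasDerivAt (fun s => (u s).ofLp) u'.ofLp t :=
  (PiLp.hasFDerivAt_ofLp (𝕜 := ℝ) 2 (u t)).comp_hasDerivAt t h

theorem ofLp_dotProduct_self (v : EuclideanSpace ℝ ι) : v.ofLp ⬝ᵥ v.ofLp = ‖v‖ ^ 2 := by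
  simp only [EuclideanSpace.norm_sq_eq, Real.norm_eq_abs, sq_abs]
  simp only [dotProduct, sq]

theorem euclidean_norm_le_sum_abs (v : EuclideanSpace ℝ ι) : ‖v‖ ≤ ∑ i, |v i| := by
  classical
  calc ‖v‖ = ‖∑ i, v i • EuclideanSpace.basisFun ι ℝ i‖ := by
        conv_lhs => rw [← (EuclideanSpace.basisFun ι ℝ).sum_repr v]
        rfl
    _ ≤ ∑ i, ‖v i • EuclideanSpace.basisFun ι ℝ i‖ := norm_sum_le _ _
    _ = ∑ i, |v i| := by simp [norm_smul]

end QuadraticForms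

section Formation

open scoped Matrix.Norms.L2Operator Gradient

variable {n : Type*}

/-- The formation matrix `R`, whose rows are the relative positions `rᵢᵀ` of the followers: it sends
a vector `v` to the inner products `⟪rᵢ, v⟫`. -/
def formationMatrix (r : n → EuclideanSpace ℝ n) : Matrix n n ℝ :=
  Matrix.of fun i => (r i).ofLp

theorem rowMat_eq_formationMatrix (u v : E2) : rowMat u v = formationMatrix ![u, v] := by
  ext i j
  fin_cases i <;> rfl

theorem continuous_formationMatrix :
    Continuous (formationMatrix : (n → EuclideanSpace ℝ n) → Matrix n n ℝ) :=
  continuous_matrix fun i j => by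
    simp only [formationMatrix, Matrix.of_apply]
    fun_prop

variable [Fintype n] [DecidableEq n]

theorem toEuclideanCLM_formationMatrix_apply (r : n → EuclideanSpace ℝ n)
    (v : EuclideanSpace ℝ n) (i : n) :
    toEuclideanCLM (𝕜 := ℝ) (formationMatrix r) v i = ⟪r i, v⟫ := by
  simp [formationMatrix, mulVec, EuclideanSpace.inner_eq_star_dotProduct, dotProduct_comm]

/-- The bound `‖R⁻¹‖ · M/2 · ∑ᵢ ‖rᵢ‖²` on the error of the gradient estimate obtained from the
relative positions `rᵢ` when the gradient of the field is `M`-Lipschitz. -/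
def estimateErrorBound (M : ℝ) (r : n → EuclideanSpace ℝ n) : ℝ :=
  ‖(formationMatrix r)⁻¹‖ * (M / 2 * ∑ i, ‖r i‖ ^ 2)

theorem continuousAt_estimateErrorBound (M : ℝ) {r : n → EuclideanSpace ℝ n}
    (hr : IsUnit (formationMatrix r)) : ContinuousAt (estimateErrorBound M) r := by
  have hinv : ContinuousAt (fun r => (formationMatrix r)⁻¹) r :=
    (continuousAt_matrix_inv _ (NormedRing.inverse_continuousAt
      ((isUnit_iff_isUnit_det _).1 hr).unit)).comp continuous_formationMatrix.continuousAt
  have hsum : Continuous fun r : n → EuclideanSpace ℝ n => M / 2 * ∑ i, ‖r i‖ ^ 2 :=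
    (continuous_finsetSum _ fun i _ => (continuous_apply i).norm.pow 2).const_mul _
  exact hinv.norm.mul hsum.continuousAt

theorem norm_sub_gradient_le_estimateErrorBound {f : EuclideanSpace ℝ n → ℝ}
    (hf : Differentiable ℝ f) {M : ℝ} {x g : EuclideanSpace ℝ n}
    (hM : ∀ y, ‖∇ f y - ∇ f x‖ ≤ M * ‖y - x‖) {r : n → EuclideanSpace ℝ n}
    (hr : IsUnit (formationMatrix r)) (hg : ∀ i, ⟪r i, g⟫ = f (x + r i) - f x) :
    ‖g - ∇ f x‖ ≤ estimateErrorBound M r := by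
  set T := toEuclideanCLM (n := n) (𝕜 := ℝ)
  have hinv : T (formationMatrix r)⁻¹ (T (formationMatrix r) (g - ∇ f x)) = g - ∇ f x := by
    rw [← mul_apply_eq_comp, ← map_mul,
      nonsing_inv_mul _ ((isUnit_iff_isUnit_det _).1 hr), map_one, one_apply_eq_self]
  have hrows (i : n) : |T (formationMatrix r) (g - ∇ f x) i| ≤ M / 2 * ‖r i‖ ^ 2 := by
    rw [toEuclideanCLM_formationMatrix_apply, inner_sub_right, hg, real_inner_comm]
    exact abs_sub_sub_inner_gradient_le hf hM (r i)
  calc ‖g - ∇ f x‖ ≤ ‖(formationMatrix r)⁻¹‖ * ‖T (formationMatrix r) (g - ∇ f x)‖ := by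
        conv_lhs => rw [← hinv]
        exact (T (formationMatrix r)⁻¹).le_opNorm _
    _ ≤ ‖(formationMatrix r)⁻¹‖ * ∑ i, M / 2 * ‖r i‖ ^ 2 := by
        gcongr
        exact (euclidean_norm_le_sum_abs _).trans (Finset.sum_le_sum fun i _ => hrows i)
    _ = estimateErrorBound M r := by rw [estimateErrorBound, ← Finset.mul_sum]

end Formation

section ClosedLoop

open Filter Topology
open scoped Gradient

variable {n : Type*} [Fintype n]

/-- The closed loop of a leader `x₀` and followers `xᵢ` with gains `k₀`, `kᵢ` and desired relative
positions `rsᵢ`. The gradient estimate `g` is specified as a solution of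
`R g = (f xᵢ - f x₀)ᵢ`, row by row, rather than through `R⁻¹`, so that no junk inverse arises at
times at which the formation matrix `R` is singular. -/
structure IsClosedLoop (f : EuclideanSpace ℝ n → ℝ) (k₀ : ℝ) (k : n → ℝ)
    (rs : n → EuclideanSpace ℝ n) (x₀ : ℝ → EuclideanSpace ℝ n) (x : n → ℝ → EuclideanSpace ℝ n)
    (g : ℝ → EuclideanSpace ℝ n) : Prop where
  inner_estimate : ∀ t ≥ 0, ∀ i, ⟪x i t - x₀ t, g t⟫ = f (x i t) - f (x₀ t)
  hasDerivAt_leader : ∀ t ≥ 0, HasDerivAt x₀ (k₀ • g t) t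
  hasDerivAt_follower : ∀ t ≥ 0, ∀ i,
    HasDerivAt (x i) (-k i • (x i t - x₀ t - rs i) + k₀ • g t) t

namespace IsClosedLoop

variable {f : EuclideanSpace ℝ n → ℝ} {k₀ : ℝ} {k : n → ℝ} {rs : n → EuclideanSpace ℝ n}
  {x₀ : ℝ → EuclideanSpace ℝ n} {x : n → ℝ → EuclideanSpace ℝ n} {g : ℝ → EuclideanSpace ℝ n}

theorem hasDerivAt_formationError (h : IsClosedLoop f k₀ k rs x₀ x g) {t : ℝ}
    (ht : 0 ≤ t) (i : n) :
    HasDerivAt (fun s => x i s - x₀ s - rs i) (-k i • (x i t - x₀ t - rs i)) t :=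
  (((h.hasDerivAt_follower t ht i).fun_sub (h.hasDerivAt_leader t ht)).sub_const _).congr_deriv
    (add_sub_cancel_right _ _)

theorem tendsto_sub (h : IsClosedLoop f k₀ k rs x₀ x g) {i : n} (hk : 0 < k i) :
    Tendsto (fun t => x i t - x₀ t) atTop (𝓝 (rs i)) :=
  tendsto_sub_nhds_zero_iff.1 <| tendsto_zero_of_hasDerivAt_neg_smul hk <|
    (eventually_ge_atTop 0).mono fun _ ht => h.hasDerivAt_formationError ht i

variable [DecidableEq n]

theorem tendsto_estimateErrorBound (h : IsClosedLoop f k₀ k rs x₀ x g)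
    (hk : ∀ i, 0 < k i) (hrs : IsUnit (formationMatrix rs)) (M : ℝ) :
    Tendsto (fun t => estimateErrorBound M fun i => x i t - x₀ t) atTop
      (𝓝 (estimateErrorBound M rs)) :=
  (continuousAt_estimateErrorBound M hrs).tendsto.comp
    (tendsto_pi_nhds.2 fun i => h.tendsto_sub (hk i))

theorem eventually_isUnit_formationMatrix (h : IsClosedLoop f k₀ k rs x₀ x g)
    (hk : ∀ i, 0 < k i) (hrs : IsUnit (formationMatrix rs)) :
    ∀ᶠ t in atTop, IsUnit (formationMatrix fun i => x i t - x₀ t) := by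
  have hdet : Tendsto (fun t => (formationMatrix fun i => x i t - x₀ t).det) atTop
      (𝓝 (formationMatrix rs).det) :=
    (continuous_formationMatrix.matrix_det.tendsto rs).comp
      (tendsto_pi_nhds.2 fun i => h.tendsto_sub (hk i))
  simp only [isUnit_iff_isUnit_det, isUnit_iff_ne_zero] at hrs ⊢
  exact hdet.eventually_ne hrs

theorem eventually_norm_sub_gradient_le (h : IsClosedLoop f k₀ k rs x₀ x g)
    (hk : ∀ i, 0 < k i) (hrs : IsUnit (formationMatrix rs)) (hf : Differentiable ℝ f) {M : ℝ}
    (hM : ∀ y z, ‖∇ f z - ∇ f y‖ ≤ M * ‖z - y‖) :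
    ∀ᶠ t in atTop, ‖g t - ∇ f (x₀ t)‖ ≤ estimateErrorBound M fun i => x i t - x₀ t := by
  filter_upwards [h.eventually_isUnit_formationMatrix hk hrs, eventually_ge_atTop 0] with t hR ht
  refine norm_sub_gradient_le_estimateErrorBound hf (hM _) hR fun i => ?_
  rw [h.inner_estimate t ht, add_sub_cancel]

end IsClosedLoop

end ClosedLoop

section Hessian

open scoped Matrix.Norms.L2Operator Gradient

theorem l2OpNorm_eq_norm (M : Matrix (Fin 2) (Fin 2) ℝ) : l2OpNorm M = ‖M‖ := rfl

variable {f : E2 → ℝ}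

theorem hessM_apply (hf : ContDiff ℝ 2 f) (x : E2) (i j : Fin 2) : hessM f x i j =
    fderiv ℝ (fderiv ℝ f) x (EuclideanSpace.single i 1) (EuclideanSpace.single j 1) := by
  rw [hessM, Matrix.of_apply, (hasFDerivAt_fderiv_apply hf x _).fderiv,
    ContinuousLinearMap.flip_apply]

theorem toEuclideanCLM_hessM_apply (hf : ContDiff ℝ 2 f) (x u : E2) (j : Fin 2) :
    toEuclideanCLM (𝕜 := ℝ) (hessM f x) u j =
      fderiv ℝ (fderiv ℝ f) x u (EuclideanSpace.single j 1) := by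
  have hsymm : IsSymmSndFDerivAt ℝ f x := hf.contDiffAt.isSymmSndFDerivAt (by simp)
  have hu : u = ∑ i, u i • EuclideanSpace.single i (1 : ℝ) := by
    simpa using ((EuclideanSpace.basisFun (Fin 2) ℝ).sum_repr u).symm
  calc toEuclideanCLM (𝕜 := ℝ) (hessM f x) u j = ∑ i, u i * hessM f x j i := by
        simp [mulVec, dotProduct, mul_comm]
    _ = fderiv ℝ (fderiv ℝ f) x (EuclideanSpace.single j 1) u := by
        conv_rhs => rw [hu]
        simp only [map_sum, map_smul, hessM_apply hf, smul_eq_mul]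
    _ = fderiv ℝ (fderiv ℝ f) x u (EuclideanSpace.single j 1) := hsymm.eq _ _

theorem hasFDerivAt_gradient (hf : ContDiff ℝ 2 f) (x : E2) :
    HasFDerivAt (∇ f) (toEuclideanCLM (𝕜 := ℝ) (hessM f x)) x := by
  rw [← hasFDerivWithinAt_univ, hasFDerivWithinAt_euclidean]
  intro j
  have hcoord : (fun y => ∇ f y j) = fun y => fderiv ℝ f y (EuclideanSpace.single j 1) := by
    ext y
    rw [← inner_gradient_left, EuclideanSpace.inner_single_right]
    simp
  rw [hcoord, hasFDerivWithinAt_univ]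
  refine (hasFDerivAt_fderiv_apply hf x _).congr_fderiv (ContinuousLinearMap.ext fun u => ?_)
  exact (toEuclideanCLM_hessM_apply hf x u j).symm

theorem norm_gradient_sub_le (hf : ContDiff ℝ 2 f) {M : ℝ} (hM : ∀ y, ‖hessM f y‖ ≤ M) (x y : E2) :
    ‖∇ f y - ∇ f x‖ ≤ M * ‖y - x‖ :=
  convex_univ.norm_image_sub_le_of_norm_hasFDerivWithin_le
    (fun z _ => (hasFDerivAt_gradient hf z).hasFDerivWithinAt) (fun z _ => hM z)
    (Set.mem_univ x) (Set.mem_univ y)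

theorem norm_gradient_sub_hessM_le (hf : ContDiff ℝ 2 f) {G : ℝ} {x : E2} (hx : ∇ f x = 0)
    (hG : ∀ y, ‖hessM f y - hessM f x‖ ≤ G) (y : E2) :
    ‖∇ f y - toEuclideanCLM (𝕜 := ℝ) (hessM f x) (y - x)‖ ≤ G * ‖y - x‖ := by
  simpa only [hx, sub_zero] using convex_univ.norm_image_sub_le_of_norm_hasFDerivWithin_le'
    (fun z _ => (hasFDerivAt_gradient hf z).hasFDerivWithinAt)
    (fun z _ => by rw [← map_sub]; exact hG z) (Set.mem_univ x) (Set.mem_univ y)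

end Hessian

section LMI

variable (a b c : Fin 2 → ℝ)

theorem Amat_mulVec (f : E2 → ℝ) (xs : E2) (k₀ k₁ k₂ : ℝ) :
    Amat f xs k₀ k₁ k₂ *ᵥ Sum.elim a (Sum.elim b c) =
      Sum.elim (-k₁ • a) (Sum.elim (-k₂ • b) (k₀ • hessM f xs *ᵥ c)) := by
  simp only [Amat, fromBlocks_mulVec, smul_mulVec, one_mulVec, zero_mulVec, Sum.elim_comp_inl,
    Sum.elim_comp_inr, add_zero, zero_add]

theorem Bmat_mulVec :
    Bmat *ᵥ c = Sum.elim (0 : Fin 2 → ℝ) (Sum.elim (0 : Fin 2 → ℝ) c) := by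
  ext (i | i | i) <;> simp [Bmat, mulVec, dotProduct]

theorem C1mat_mulVec : C1mat *ᵥ Sum.elim a (Sum.elim b c) = c := by
  ext i
  simp [C1mat, mulVec, dotProduct]

theorem Dmat_mulVec (τ γ₁ γ₂ : ℝ) :
    Dmat τ γ₁ γ₂ *ᵥ Sum.elim a (Sum.elim b c) =
      Sum.elim (-τ • a) (Sum.elim (-γ₁ • b) (-γ₂ • c)) := by
  simp only [Dmat, fromBlocks_mulVec, smul_mulVec, one_mulVec, zero_mulVec, Sum.elim_comp_inl,
    Sum.elim_comp_inr, add_zero, zero_add]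

theorem Umat_mulVec (P : Matrix E6 E6 ℝ) :
    Umat P *ᵥ Sum.elim a (Sum.elim b c) = P *ᵥ Bmat *ᵥ (a + b + c) := by
  ext i
  rw [mulVec_mulVec]
  simp only [Umat, mulVec, dotProduct, of_apply, collapse, Fintype.sum_sum_type, Sum.elim_inl,
    Sum.elim_inr, id_eq, Pi.add_apply, mul_add, Finset.sum_add_distrib, add_assoc]

theorem Lmat_eq_transpose_Umat {P : Matrix E6 E6 ℝ} (hP : P.IsSymm) : Lmat P = (Umat P)ᵀ := by
  ext t i
  rw [Lmat, Umat, of_apply, transpose_apply, of_apply, ← transpose_apply (P * Bmat),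
    transpose_mul, hP.eq]

theorem dotProduct_Qmat_mulVec {P : Matrix E6 E6 ℝ} (hP : P.IsSymm) (A : Matrix E6 E6 ℝ)
    (τ α₁ lam : ℝ) (χ : E6 → ℝ) :
    χ ⬝ᵥ Qmat P A τ α₁ lam *ᵥ χ = 2 * (χ ⬝ᵥ P *ᵥ A *ᵥ χ)
      + τ * α₁ ^ 2 * (C1mat *ᵥ χ ⬝ᵥ C1mat *ᵥ χ) + lam * (χ ⬝ᵥ P *ᵥ χ) := by
  have hPA : χ ⬝ᵥ (P * A) *ᵥ χ = χ ⬝ᵥ P *ᵥ A *ᵥ χ := by rw [mulVec_mulVec]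
  have hAP : χ ⬝ᵥ (Aᵀ * P) *ᵥ χ = χ ⬝ᵥ P *ᵥ A *ᵥ χ := by
    rw [← dotProduct_transpose_mulVec, transpose_mul, transpose_transpose, hP.eq, hPA]
  have hCC : χ ⬝ᵥ (C1matᵀ * C1mat) *ᵥ χ = C1mat *ᵥ χ ⬝ᵥ C1mat *ᵥ χ := by
    rw [← mulVec_mulVec, dotProduct_transpose_mulVec]
  simp only [Qmat, add_mulVec, smul_mulVec, dotProduct_add, dotProduct_smul, smul_eq_mul, hPA, hAP,
    hCC]
  ring

theorem dissipation_of_lmiMat {P A : Matrix E6 E6 ℝ} {lam τ γ₁ γ₂ α₁ : ℝ} (hP : P.IsSymm)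
    (hLMI : (-lmiMat P A lam τ γ₁ γ₂ α₁).PosSemidef) (χ : E6 → ℝ) (w₁ w₂ : Fin 2 → ℝ) :
    2 * (χ ⬝ᵥ P *ᵥ (A *ᵥ χ + Bmat *ᵥ (w₁ + w₂))) ≤ -lam * (χ ⬝ᵥ P *ᵥ χ)
      + τ * (w₁ ⬝ᵥ w₁ - α₁ ^ 2 * (C1mat *ᵥ χ ⬝ᵥ C1mat *ᵥ χ)) + γ₁ * (w₂ ⬝ᵥ w₂) := by
  set w : E6 → ℝ := Sum.elim w₁ (Sum.elim w₂ 0)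
  have hU : χ ⬝ᵥ Umat P *ᵥ w = χ ⬝ᵥ P *ᵥ Bmat *ᵥ (w₁ + w₂) := by rw [Umat_mulVec, add_zero]
  have hL : w ⬝ᵥ Lmat P *ᵥ χ = χ ⬝ᵥ P *ᵥ Bmat *ᵥ (w₁ + w₂) := by
    rw [Lmat_eq_transpose_Umat hP, dotProduct_transpose_mulVec, hU]
  have hD : w ⬝ᵥ Dmat τ γ₁ γ₂ *ᵥ w = -τ * (w₁ ⬝ᵥ w₁) - γ₁ * (w₂ ⬝ᵥ w₂) := by
    simp only [w, Dmat_mulVec, sumElim_dotProduct_sumElim, dotProduct_smul, smul_eq_mul,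
      dotProduct_zero, mul_zero]
    ring
  have hquad := hLMI.dotProduct_mulVec_nonneg (Sum.elim χ w)
  rw [star_trivial, lmiMat, neg_mulVec, dotProduct_neg, fromBlocks_mulVec,
    sumElim_dotProduct_sumElim, Sum.elim_comp_inl, Sum.elim_comp_inr, dotProduct_add,
    dotProduct_add, dotProduct_Qmat_mulVec hP, hU, hL, hD] at hquad
  rw [mulVec_add, dotProduct_add]
  linarith

end LMI

section ErrorDynamics

open Filter Topology
open scoped Matrix.Norms.L2Operator Gradient

/-- The state `χ = (r₁ - r₁*, r₂ - r₂*, x₀ - x*)` of the combined error dynamics of a leader with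
two followers. -/
def stackedError (rs : Fin 2 → E2) (xs : E2) (x₀ : ℝ → E2) (x : Fin 2 → ℝ → E2) (t : ℝ) : E6 → ℝ :=
  Sum.elim (x 0 t - x₀ t - rs 0).ofLp (Sum.elim (x 1 t - x₀ t - rs 1).ofLp (x₀ t - xs).ofLp)

theorem norm_sq_leader_le_stackedError_dotProduct_self (rs : Fin 2 → E2) (xs : E2) (x₀ : ℝ → E2)
    (x : Fin 2 → ℝ → E2) (t : ℝ) :
    ‖x₀ t - xs‖ ^ 2 ≤ stackedError rs xs x₀ x t ⬝ᵥ stackedError rs xs x₀ x t := by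
  simp only [stackedError, sumElim_dotProduct_sumElim, ofLp_dotProduct_self]
  linarith [sq_nonneg ‖x 0 t - x₀ t - rs 0‖, sq_nonneg ‖x 1 t - x₀ t - rs 1‖]

variable {f : E2 → ℝ} {k₀ : ℝ} {x₀ : ℝ → E2} {g : ℝ → E2}

theorem IsClosedLoop.of_rowMat {k₁ k₂ : ℝ} {r₁s r₂s : E2} {x₁ x₂ : ℝ → E2}
    (hR : ∀ t ≥ 0, IsUnit (rowMat (x₁ t - x₀ t) (x₂ t - x₀ t)))
    (hg : ∀ t ≥ 0, g t = matVec (rowMat (x₁ t - x₀ t) (x₂ t - x₀ t))⁻¹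
      (vec2 (f (x₁ t) - f (x₀ t)) (f (x₂ t) - f (x₀ t))))
    (hx₀ : ∀ t ≥ 0, HasDerivAt x₀ (k₀ • g t) t)
    (hx₁ : ∀ t ≥ 0, HasDerivAt x₁ (-k₁ • (x₁ t - x₀ t - r₁s) + k₀ • g t) t)
    (hx₂ : ∀ t ≥ 0, HasDerivAt x₂ (-k₂ • (x₂ t - x₀ t - r₂s) + k₀ • g t) t) :
    IsClosedLoop f k₀ ![k₁, k₂] ![r₁s, r₂s] x₀ ![x₁, x₂] g where
  inner_estimate t ht := by
    have hRg : toEuclideanCLM (𝕜 := ℝ) (rowMat (x₁ t - x₀ t) (x₂ t - x₀ t)) (g t) =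
        vec2 (f (x₁ t) - f (x₀ t)) (f (x₂ t) - f (x₀ t)) := by
      refine WithLp.ofLp_injective 2 ?_
      rw [hg t ht, ofLp_toEuclideanCLM, matVec, WithLp.equiv_symm_apply, WithLp.ofLp_toLp,
        mulVec_mulVec, mul_nonsing_inv _ ((isUnit_iff_isUnit_det _).1 (hR t ht)), one_mulVec,
        WithLp.equiv_apply]
    rw [rowMat_eq_formationMatrix] at hRg
    have hrow (i : Fin 2) := (toEuclideanCLM_formationMatrix_apply ![x₁ t - x₀ t, x₂ t - x₀ t]
      (g t) i).symm.trans (congrArg (fun v : E2 => v i) hRg)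
    exact Fin.forall_fin_two.2 ⟨hrow 0, hrow 1⟩
  hasDerivAt_leader := hx₀
  hasDerivAt_follower t ht := Fin.forall_fin_two.2 ⟨hx₁ t ht, hx₂ t ht⟩

variable {k : Fin 2 → ℝ} {rs : Fin 2 → E2} {x : Fin 2 → ℝ → E2}

theorem IsClosedLoop.hasDerivAt_stackedError (h : IsClosedLoop f k₀ k rs x₀ x g) (xs : E2) {t : ℝ}
    (ht : 0 ≤ t) :
    HasDerivAt (stackedError rs xs x₀ x)
      (Amat f xs k₀ (k 0) (k 1) *ᵥ stackedError rs xs x₀ x t + Bmat *ᵥ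
        ((k₀ • (∇ f (x₀ t) - toEuclideanCLM (𝕜 := ℝ) (hessM f xs) (x₀ t - xs))).ofLp
          + (k₀ • (g t - ∇ f (x₀ t))).ofLp)) t := by
  refine (hasDerivAt_sumElim (hasDerivAt_ofLp (h.hasDerivAt_formationError ht 0))
    (hasDerivAt_sumElim (hasDerivAt_ofLp (h.hasDerivAt_formationError ht 1))
      (hasDerivAt_ofLp ((h.hasDerivAt_leader t ht).sub_const xs)))).congr_deriv ?_
  have hleader : (k₀ • g t).ofLp = k₀ • hessM f xs *ᵥ (x₀ t - xs).ofLp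
      + ((k₀ • (∇ f (x₀ t) - toEuclideanCLM (𝕜 := ℝ) (hessM f xs) (x₀ t - xs))).ofLp
        + (k₀ • (g t - ∇ f (x₀ t))).ofLp) := by
    simp only [WithLp.ofLp_smul, WithLp.ofLp_sub, ofLp_toEuclideanCLM, smul_sub]
    abel
  rw [stackedError, Amat_mulVec, Bmat_mulVec, hleader, ← Sum.elim_add_add,
    ← Sum.elim_add_add, add_zero, add_zero, WithLp.ofLp_smul, WithLp.ofLp_smul]

theorem IsClosedLoop.deriv_lyapunov_le (h : IsClosedLoop f k₀ k rs x₀ x g) (hf : ContDiff ℝ 2 f)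
    {xs : E2} (hxs : ∇ f xs = 0) {G α₁ : ℝ} (hG : ∀ y, ‖hessM f y - hessM f xs‖ ≤ G)
    (hα₁ : |k₀| * G ≤ α₁) {P : Matrix E6 E6 ℝ} (hP : P.IsSymm) {lam τ γ₁ γ₂ : ℝ} (hτ : 0 ≤ τ)
    (hLMI : (-lmiMat P (Amat f xs k₀ (k 0) (k 1)) lam τ γ₁ γ₂ α₁).PosSemidef) {t : ℝ}
    (ht : 0 ≤ t) :
    deriv (fun s => stackedError rs xs x₀ x s ⬝ᵥ P *ᵥ stackedError rs xs x₀ x s) t ≤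
      -lam * (stackedError rs xs x₀ x t ⬝ᵥ P *ᵥ stackedError rs xs x₀ x t)
        + γ₁ * ‖k₀ • (g t - ∇ f (x₀ t))‖ ^ 2 := by
  set w₁ : E2 := k₀ • (∇ f (x₀ t) - toEuclideanCLM (𝕜 := ℝ) (hessM f xs) (x₀ t - xs))
  have hw₁ : ‖w₁‖ ≤ α₁ * ‖x₀ t - xs‖ :=
    calc ‖w₁‖ ≤ |k₀| * (G * ‖x₀ t - xs‖) := by
          rw [norm_smul, Real.norm_eq_abs]
          gcongr
          exact norm_gradient_sub_hessM_le hf hxs hG _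
      _ ≤ α₁ * ‖x₀ t - xs‖ := by
          rw [← mul_assoc]
          gcongr
  have hsector : τ * (‖w₁‖ ^ 2 - α₁ ^ 2 * ‖x₀ t - xs‖ ^ 2) ≤ 0 :=
    mul_nonpos_of_nonneg_of_nonpos hτ <| sub_nonpos.2 <| by
      rw [← mul_pow]
      gcongr
  have hC₁ : C1mat *ᵥ stackedError rs xs x₀ x t = (x₀ t - xs).ofLp := C1mat_mulVec _ _ _
  have hdissipation := dissipation_of_lmiMat hP hLMI (stackedError rs xs x₀ x t) w₁.ofLp
    (k₀ • (g t - ∇ f (x₀ t))).ofLp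
  rw [hC₁, ofLp_dotProduct_self, ofLp_dotProduct_self, ofLp_dotProduct_self] at hdissipation
  rw [(hasDerivAt_dotProduct_mulVec_self hP (h.hasDerivAt_stackedError xs ht)).deriv]
  linarith

theorem IsClosedLoop.limsup_norm_sq_le (h : IsClosedLoop f k₀ k rs x₀ x g) (hk : ∀ i, 0 < k i)
    (hrs : IsUnit (formationMatrix rs)) (hf : ContDiff ℝ 2 f) {xs : E2} (hxs : ∇ f xs = 0)
    {M G α₁ : ℝ} (hM : ∀ y, ‖hessM f y‖ ≤ M) (hG : ∀ y, ‖hessM f y - hessM f xs‖ ≤ G)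
    (hα₁ : |k₀| * G ≤ α₁) {P : Matrix E6 E6 ℝ} (hP : P.PosDef) {lam τ γ₁ γ₂ : ℝ}
    (hlam : 0 < lam) (hτ : 0 ≤ τ) (hγ₁ : 0 ≤ γ₁)
    (hLMI : (-lmiMat P (Amat f xs k₀ (k 0) (k 1)) lam τ γ₁ γ₂ α₁).PosSemidef) :
    limsup (fun t => ‖x₀ t - xs‖ ^ 2) atTop ≤
      γ₁ * (|k₀| * estimateErrorBound M rs) ^ 2 / (lam * ⨅ i, hP.1.eigenvalues i) := by
  have hPsymm : P.IsSymm := isHermitian_iff_isSymm.1 hP.1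
  set σ := ⨅ i, hP.1.eigenvalues i
  have hσ : 0 < σ := by
    obtain ⟨i, hi⟩ := exists_eq_ciInf_of_finite (f := hP.1.eigenvalues)
    exact (hP.eigenvalues_pos i).trans_eq hi
  set β := fun t => estimateErrorBound M fun i => x i t - x₀ t
  set V := fun t => stackedError rs xs x₀ x t ⬝ᵥ P *ᵥ stackedError rs xs x₀ x t
  have hVdiff : ∀ᶠ t in atTop, DifferentiableAt ℝ V t :=
    (eventually_ge_atTop 0).mono fun t ht => (hasDerivAt_dotProduct_mulVec_self hPsymm
      (h.hasDerivAt_stackedError xs ht)).differentiableAt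
  have hVderiv : ∀ᶠ t in atTop, deriv V t ≤ -lam * V t + γ₁ * (|k₀| * β t) ^ 2 := by
    filter_upwards [h.eventually_norm_sub_gradient_le hk hrs (hf.differentiable two_ne_zero)
      (norm_gradient_sub_le hf hM), eventually_ge_atTop 0] with t hg ht
    refine (h.deriv_lyapunov_le hf hxs hG hα₁ hPsymm hτ hLMI ht).trans ?_
    rw [norm_smul, Real.norm_eq_abs]
    gcongr
  have hβ : Tendsto (fun t => γ₁ * (|k₀| * β t) ^ 2) atTop
      (𝓝 (γ₁ * (|k₀| * estimateErrorBound M rs) ^ 2)) :=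
    (((h.tendsto_estimateErrorBound hk hrs M).const_mul _).pow 2).const_mul _
  refine le_of_forall_gt_imp_ge_of_dense fun c hc => ?_
  have hVlt : ∀ᶠ t in atTop, V t < c * σ :=
    eventually_lt_of_deriv_le hlam hVdiff hVderiv hβ (by rwa [← div_lt_iff₀ hσ, div_div])
  refine limsup_le_of_le
    (isCoboundedUnder_le_of_le atTop (x := 0) fun t => sq_nonneg _) (hVlt.mono fun t ht => ?_)
  refine le_of_mul_le_mul_left ?_ hσ
  calc σ * ‖x₀ t - xs‖ ^ 2 ≤ σ * (stackedError rs xs x₀ x t ⬝ᵥ stackedError rs xs x₀ x t) := by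
        gcongr
        exact norm_sq_leader_le_stackedError_dotProduct_self rs xs x₀ x t
    _ ≤ V t := iInf_eigenvalues_mul_dotProduct_self_le hP.1 _
    _ ≤ σ * c := by linarith

theorem stmt15_general {xs : E2} (hf : ContDiff ℝ 2 f) (hxs : ∇ f xs = 0) {M_H G_H : ℝ}
    (hMH : ∀ y, l2OpNorm (hessM f y) ≤ M_H) (hGH : ∀ y, l2OpNorm (hessM f y - hessM f xs) ≤ G_H)
    {k₁ k₂ : ℝ} (hk₁ : 0 < k₁) (hk₂ : 0 < k₂) {r₁s r₂s : E2} (hRs : IsUnit (rowMat r₁s r₂s))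
    {x₁ x₂ : ℝ → E2} (h : IsClosedLoop f k₀ ![k₁, k₂] ![r₁s, r₂s] x₀ ![x₁, x₂] g)
    {α₁ : ℝ} (hα₁ : |k₀| * G_H ≤ α₁) {P : Matrix E6 E6 ℝ} (hP : P.PosDef) {lam τ γ₁ γ₂ : ℝ}
    (hlam : 0 < lam) (hτ : 0 ≤ τ) (hγ₁ : 0 ≤ γ₁)
    (hLMI : (-lmiMat P (Amat f xs k₀ k₁ k₂) lam τ γ₁ γ₂ α₁).PosSemidef) :
    Tendsto (fun t => x₁ t - x₀ t) atTop (𝓝 r₁s) ∧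
    Tendsto (fun t => x₂ t - x₀ t) atTop (𝓝 r₂s) ∧
    Tendsto (fun t => ‖x₁ t - x₀ t‖) atTop (𝓝 ‖r₁s‖) ∧
    Tendsto (fun t => ‖x₂ t - x₀ t‖) atTop (𝓝 ‖r₂s‖) ∧
    limsup (fun t => ‖x₀ t - xs‖ ^ 2) atTop
      ≤ γ₁ * k₀ ^ 2 * M_H ^ 2 * l2OpNorm (rowMat r₁s r₂s)⁻¹ ^ 2 * (‖r₁s‖ ^ 2 + ‖r₂s‖ ^ 2) ^ 2
        / (4 * lam * ⨅ i, hP.1.eigenvalues i) := by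
  have hr₁ : Tendsto (fun t => x₁ t - x₀ t) atTop (𝓝 r₁s) := h.tendsto_sub (i := 0) hk₁
  have hr₂ : Tendsto (fun t => x₂ t - x₀ t) atTop (𝓝 r₂s) := h.tendsto_sub (i := 1) hk₂
  refine ⟨hr₁, hr₂, hr₁.norm, hr₂.norm, ?_⟩
  rw [rowMat_eq_formationMatrix] at hRs
  refine (h.limsup_norm_sq_le (Fin.forall_fin_two.2 ⟨hk₁, hk₂⟩) hRs hf hxs hMH hGH hα₁ hP hlam hτ
    hγ₁ hLMI).trans_eq ?_
  rw [estimateErrorBound, Fin.sum_univ_two, mul_pow, sq_abs, rowMat_eq_formationMatrix,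
    l2OpNorm_eq_norm]
  simp only [cons_val_zero, cons_val_one]
  ring

end ErrorDynamics

open Filter in
/-- main theorem: simultaneous formation acquisition and extremum
seeking.  Under the field assumptions, the closed-loop control law, and feasibility of
the LMI, the relative positions converge to the desired formation and
`limsup_{t→∞} ‖x₀(t) − x*‖² ≤ γ₁ k₀² M_H² ‖R*⁻¹‖² (‖r₁*‖² + ‖r₂*‖²)² / (4 λ σ_min(P))`. -/
theorem stmt15 (f : E2 → ℝ) (hf : ContDiff ℝ 3 f) (xs : E2)
    (hmax : ∀ y : E2, y ≠ xs → f y < f xs)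
    (M_H : ℝ) (hMH : ∀ y : E2, l2OpNorm (hessM f y) ≤ M_H)
    (hnegdef : (-(hessM f xs)).PosDef)
    (L_H : ℝ) (hLH : ∀ y₁ y₂ : E2, l2OpNorm (hessM f y₁ - hessM f y₂) ≤ L_H * ‖y₁ - y₂‖)
    (G_H : ℝ) (hGH : ∀ y₁ y₂ : E2, l2OpNorm (hessM f y₁ - hessM f y₂) ≤ G_H)
    (k₀ k₁ k₂ : ℝ) (hk₀ : 0 < k₀) (hk₁ : 0 < k₁) (hk₂ : 0 < k₂)
    (r₁s r₂s : E2) (Rs : Matrix (Fin 2) (Fin 2) ℝ) (hRs : Rs = rowMat r₁s r₂s)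
    (hRsUnit : IsUnit Rs)
    (x₀ x₁ x₂ : ℝ → E2)
    (R : ℝ → Matrix (Fin 2) (Fin 2) ℝ)
    (hRdef : ∀ t : ℝ, R t = rowMat (x₁ t - x₀ t) (x₂ t - x₀ t))
    (hRUnit : ∀ t ≥ (0 : ℝ), IsUnit (R t))
    (g : ℝ → E2)
    (hg : ∀ t : ℝ, g t = matVec (R t)⁻¹
      (vec2 (f (x₁ t) - f (x₀ t)) (f (x₂ t) - f (x₀ t))))
    (hx₀ : ∀ t ≥ (0 : ℝ), HasDerivAt x₀ (k₀ • g t) t)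
    (hx₁ : ∀ t ≥ (0 : ℝ), HasDerivAt x₁ ((-k₁) • (x₁ t - x₀ t - r₁s) + k₀ • g t) t)
    (hx₂ : ∀ t ≥ (0 : ℝ), HasDerivAt x₂ ((-k₂) • (x₂ t - x₀ t - r₂s) + k₀ • g t) t)
    (α₁ : ℝ) (hα₁ : α₁ = 2 * G_H * k₀)
    (P : Matrix E6 E6 ℝ) (hPsymm : P.IsSymm) (hPpos : P.PosDef)
    (lam τ γ₁ γ₂ : ℝ) (hlam : 0 < lam) (hτ : 0 < τ) (hγ₁ : 0 < γ₁) (hγ₂ : 0 < γ₂)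
    (hLMI : (-(lmiMat P (Amat f xs k₀ k₁ k₂) lam τ γ₁ γ₂ α₁)).PosDef) :
    Tendsto (fun t => x₁ t - x₀ t) atTop (nhds r₁s) ∧
    Tendsto (fun t => x₂ t - x₀ t) atTop (nhds r₂s) ∧
    Tendsto (fun t => ‖x₁ t - x₀ t‖) atTop (nhds ‖r₁s‖) ∧
    Tendsto (fun t => ‖x₂ t - x₀ t‖) atTop (nhds ‖r₂s‖) ∧
    limsup (fun t => ‖x₀ t - xs‖ ^ 2) atTop
      ≤ γ₁ * k₀ ^ 2 * M_H ^ 2 * l2OpNorm Rs⁻¹ ^ 2 * (‖r₁s‖ ^ 2 + ‖r₂s‖ ^ 2) ^ 2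
        / (4 * lam * ⨅ i, hPpos.1.eigenvalues i) := by
  obtain rfl : R = _ := funext hRdef
  subst hRs hα₁
  have hxs : gradient f xs = 0 := gradient_eq_zero_of_isLocalMax <| .of_forall fun y =>
    (eq_or_ne y xs).elim (· ▸ le_rfl) (hmax y · |>.le)
  have hG_H : 0 ≤ G_H := (norm_nonneg _).trans (hGH xs xs)
  exact stmt15_general (hf.of_le (by norm_num)) hxs hMH (hGH · xs) hk₁ hk₂ hRsUnit
    (.of_rowMat hRUnit (fun t _ => hg t) hx₀ hx₁ hx₂) (by rw [abs_of_pos hk₀]; nlinarith)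
    hPpos hlam hτ.le hγ₁.le hLMI.posSemidef
end
end
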